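/- For every β > 1 there exists β′ with 1 < β′ < 2 such that the beta-shifts X_β and X_{β′} are flow equivalent. -/

import Mathlib

namespace SymbolicDynamics

/-! ### Basic symbolic dynamics set-up

All shift spaces are realized inside the full shift over the countable ambient
alphabet `ℕ`; an actual shift space uses only a finite subset of `ℕ` as its
alphabet.  This gives a uniform setting in which shift spaces over varying
finite alphabets can be compared (as required by flow equivalence). -/

/-- Biinfinite sequences over the ambient alphabet `ℕ`. -/
abbrev Seq : Type := ℤ → ℕ

/-- The shift map `σ`, `(σ x) i = x (i+1)`. -/
def shift (x : Seq) : Seq := fun i => x (i + 1)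

/-- The word `x_i x_{i+1} ⋯ x_{i+n-1}` of length `n` occurring in `x` at position `i`. -/
def wordAt (x : Seq) (i : ℤ) (n : ℕ) : List ℕ :=
  List.ofFn fun k : Fin n => x (i + (k.val : ℤ))

/-- `w` occurs as a factor of the biinfinite sequence `x`. -/
def FactorOf (w : List ℕ) (x : Seq) : Prop := ∃ i : ℤ, wordAt x i w.length = w

/-- The language `B(X)`: all finite words occurring in points of `X`. -/
def lang (X : Set Seq) : Set (List ℕ) := {w | ∃ x ∈ X, FactorOf w x}

/-- `X_F`: the set of biinfinite sequences containing no word of `F` as a factor. -/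
def XF (F : Set (List ℕ)) : Set Seq := {x | ∀ w ∈ F, ¬ FactorOf w x}

/-- `X` is a shift space over the finite alphabet `A ⊆ ℕ`: `X` is a closed,
shift-invariant set of biinfinite sequences with letters in `A`. -/
def IsSubshift (A : Set ℕ) (X : Set Seq) : Prop :=
  A.Finite ∧ IsClosed X ∧ (∀ x, x ∈ X ↔ shift x ∈ X) ∧ ∀ x ∈ X, ∀ i, x i ∈ A

/-- `X` is a shift space (over some finite alphabet). -/
def IsShiftSpace (X : Set Seq) : Prop := ∃ A : Set ℕ, IsSubshift A X

/-- A conjugacy between `X` and `Y`: a shift-commuting homeomorphism. -/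
def Conjugate (X Y : Set Seq) : Prop :=
  ∃ φ : ↥X ≃ₜ ↥Y, ∀ x y : ↥X, shift x.1 = y.1 → shift (φ x).1 = (φ y).1

/-- The (globally defined) map `φ` restricts to a conjugacy from `X` onto `Y`:
there is a shift-commuting homeomorphism `X → Y` whose underlying map is `φ`. -/
def ConjugacyVia (φ : Seq → Seq) (X Y : Set Seq) : Prop :=
  ∃ h : ↥X ≃ₜ ↥Y, (∀ x : ↥X, (h x).1 = φ x.1) ∧
    ∀ x y : ↥X, shift x.1 = y.1 → shift (h x).1 = (h y).1

/-- `y` is obtained from `x` by replacing every occurrence of the letter `a` by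
`a ◇` (with `◇ = d`), possibly followed by one shift.  The reindexing function
`p` records the position in `y` of the `k`-th letter of `x`. -/
def ExpandsTo (a d : ℕ) (x y : Seq) : Prop :=
  ∃ p : ℤ → ℤ, (p 0 = 0 ∨ p 0 = -1) ∧
    (∀ k, p (k + 1) = p k + if x k = a then 2 else 1) ∧
    (∀ k, y (p k) = x k) ∧
    ∀ k, x k = a → y (p k + 1) = d

/-- The symbol expansion `X^{a ↦ a◇}` with `◇ = d` (a symbol not in the alphabet
of `X`): all sequences obtained from points of `X` by replacing every
occurrence of `a` by `a◇`, together with all shifts of such sequences. -/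
def symbolExpansion (X : Set Seq) (a d : ℕ) : Set Seq := {y | ∃ x ∈ X, ExpandsTo a d x y}

/-- Flow equivalence: the smallest equivalence relation on shift spaces (over
varying finite alphabets) containing conjugacy and relating every shift space
`X` to its symbol expansion `X^{a ↦ a◇}` for every letter `a` of the alphabet of
`X` and every new symbol `◇` (Parry–Sullivan). -/
inductive FlowEquiv : Set Seq → Set Seq → Prop
  | of_conjugate {X Y : Set Seq} (hX : IsShiftSpace X) (hY : IsShiftSpace Y)
      (h : Conjugate X Y) : FlowEquiv X Y
  | expand {X : Set Seq} {A : Set ℕ} (a d : ℕ) (hX : IsSubshift A X)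
      (ha : a ∈ A) (hd : d ∉ A) : FlowEquiv X (symbolExpansion X a d)
  | symm {X Y : Set Seq} : FlowEquiv X Y → FlowEquiv Y X
  | trans {X Y Z : Set Seq} : FlowEquiv X Y → FlowEquiv Y Z → FlowEquiv X Z

/-- The full shift on `k` symbols (realized on the alphabet `{0, …, k-1}`). -/
def fullShift (k : ℕ) : Set Seq := {x | ∀ i, x i < k}

/-- `X` is a shift of finite type. -/
def IsSFT (X : Set Seq) : Prop := ∃ F : Set (List ℕ), F.Finite ∧ X = XF F

/-- `X` is an `n`-step shift of finite type:  `X = X_F` for a finite set `F` of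
forbidden words of length `n+1`. -/
def IsNStepSFT (X : Set Seq) (n : ℕ) : Prop :=
  ∃ F : Set (List ℕ), F.Finite ∧ (∀ w ∈ F, w.length = n + 1) ∧ X = XF F

/-- Irreducibility of a shift space. -/
def IsIrreducibleShift (X : Set Seq) : Prop :=
  ∀ u ∈ lang X, ∀ w ∈ lang X, ∃ v ∈ lang X, u ++ v ++ w ∈ lang X

/-! ### Beta-shifts -/

/-- `betaR β t n` is `rₙ(t)`: `r₀(t) = t`, `r_{n+1}(t) = frac (β · rₙ(t))`. -/
noncomputable def betaR (β t : ℝ) : ℕ → ℝ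
  | 0 => t
  | n + 1 => Int.fract (β * betaR β t n)

/-- `betaDigit β t n` is the digit `x_{n+1}(t) = ⌊β · rₙ(t)⌋` of the
β-expansion of `t` (0-based indexing). -/
noncomputable def betaDigit (β t : ℝ) (n : ℕ) : ℕ := (⌊β * betaR β t n⌋).toNat

/-- `g` is the generating sequence `g(β)` (with 0-based indexing,
`g i = g_{i+1}`): it equals the β-expansion `e(β)` of `1` if the latter is not
eventually zero, and equals `(a₁ ⋯ a_{k-1} (a_k - 1))^∞` if
`e(β) = a₁ ⋯ a_k 0 0 ⋯` with `a_k ≠ 0`. -/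
def IsGenSeq (β : ℝ) (g : ℕ → ℕ) : Prop :=
  ((¬ ∃ N : ℕ, ∀ n ≥ N, betaDigit β 1 n = 0) ∧ g = betaDigit β 1) ∨
  (∃ k : ℕ, betaDigit β 1 k ≠ 0 ∧ (∀ n > k, betaDigit β 1 n = 0) ∧
    ∀ n : ℕ, g n = if n % (k + 1) = k then betaDigit β 1 k - 1
      else betaDigit β 1 (n % (k + 1)))

/-- The words `xₙ(t) x_{n+1}(t) ⋯ x_m(t)` (`t ∈ [0,1]`, `1 ≤ n ≤ m`) of the
beta-shift. -/
def betaWords (β : ℝ) : Set (List ℕ) :=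
  {w | ∃ t ∈ Set.Icc (0 : ℝ) 1, ∃ n₀ m : ℕ,
    w = List.ofFn fun j : Fin m => betaDigit β t (n₀ + (j : ℕ))}

/-- The beta-shift `X_β`: the shift space whose language is `betaWords β`. -/
def betaShift (β : ℝ) : Set Seq := {x | ∀ (i : ℤ) (m : ℕ), wordAt x i m ∈ betaWords β}

/-! ### Lexicographic order on one-sided sequences -/

/-- The one-sided sequence `u` with its first `k` letters removed. -/
def dropSeq (k : ℕ) (u : ℕ → ℕ) : ℕ → ℕ := fun i => u (k + i)

@[simp] lemma dropSeq_zero (u : ℕ → ℕ) : dropSeq 0 u = u := by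
  funext i; simp [dropSeq]

/-- The right-infinite part of `x` starting at position `i`. -/
def rightTail (x : Seq) (i : ℤ) : ℕ → ℕ := fun k => x (i + k)

/-- Strict lexicographic order on one-sided sequences. -/
def LexLT (u v : ℕ → ℕ) : Prop := ∃ q, (∀ k < q, u k = v k) ∧ u q < v q

/-- Lexicographic order on one-sided sequences. -/
def LexLE (u v : ℕ → ℕ) : Prop := ∀ q, (∀ k < q, u k = v k) → u q ≤ v q

lemma lexLE_iff_not_lexLT {u v : ℕ → ℕ} : LexLE u v ↔ ¬ LexLT v u := by
  constructor
  · rintro h ⟨q, hq, hlt⟩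
    exact absurd (h q fun k hk => (hq k hk).symm) (by omega)
  · intro h q hq
    by_contra hlt
    exact h ⟨q, fun k hk => (hq k hk).symm, by omega⟩

lemma LexLE.eq_or_lexLT {u v : ℕ → ℕ} (h : LexLE u v) : u = v ∨ LexLT u v := by
  by_cases huv : LexLT u v
  · exact Or.inr huv
  · left
    funext n
    induction n using Nat.strong_induction_on with
    | _ n ih =>
      exact le_antisymm (h n ih)
        (lexLE_iff_not_lexLT.2 huv n fun k hk => (ih k hk).symm)

lemma LexLT.not_lexLT {u v : ℕ → ℕ} (h : LexLT u v) : ¬ LexLT v u := by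
  rintro ⟨r, hr, hr'⟩
  obtain ⟨q, hq, hq'⟩ := h
  rcases lt_trichotomy q r with hlt | rfl | hlt
  · have := hr q hlt; omega
  · omega
  · have := hq r hlt; omega

lemma LexLT.lexLE {u v : ℕ → ℕ} (h : LexLT u v) : LexLE u v :=
  lexLE_iff_not_lexLT.2 h.not_lexLT

lemma lexLE_refl (u : ℕ → ℕ) : LexLE u u := fun _ _ => le_rfl

/-! ### The substitution `j ↦ 1^j 0` on one-sided sequences -/

/-- One step of reading `1^{u₀} 0 1^{u₁} 0 ⋯`: the sequence of exponents after
the first letter has been removed. -/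
def unaryStep (u : ℕ → ℕ) : ℕ → ℕ :=
  if u 0 = 0 then dropSeq 1 u else Function.update u 0 (u 0 - 1)

/-- The sequence `1^{u₀} 0 1^{u₁} 0 ⋯`. -/
def unary (u : ℕ → ℕ) (m : ℕ) : ℕ := if (unaryStep^[m] u) 0 = 0 then 0 else 1

lemma unary_zero (u : ℕ → ℕ) : unary u 0 = if u 0 = 0 then 0 else 1 := rfl

lemma unary_succ (u : ℕ → ℕ) (m : ℕ) : unary u (m + 1) = unary (unaryStep u) m := rfl

lemma dropSeq_unary (m : ℕ) (u : ℕ → ℕ) : dropSeq m (unary u) = unary (unaryStep^[m] u) := by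
  funext s
  simp only [dropSeq, unary, ← Function.iterate_add_apply, Nat.add_comm m s]

lemma LexLT.unary_of_step {u v : ℕ → ℕ} (h0 : unary u 0 = unary v 0)
    (h : LexLT (unary (unaryStep u)) (unary (unaryStep v))) : LexLT (unary u) (unary v) := by
  obtain ⟨q, hq, hlt⟩ := h
  refine ⟨q + 1, fun k hk => ?_, hlt⟩
  cases k with
  | zero => exact h0
  | succ k => exact hq k (by omega)

lemma LexLT.unary {u v : ℕ → ℕ} (h : LexLT u v) : LexLT (unary u) (unary v) := by
  obtain ⟨q, hq, hlt⟩ := h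
  induction q generalizing u v with
  | zero =>
    induction hn : u 0 generalizing u v with
    | zero =>
      have hv : v 0 ≠ 0 := by omega
      exact ⟨0, by simp, by simp [unary_zero, hn, hv]⟩
    | succ n ih =>
      have hu : u 0 ≠ 0 := by omega
      have hv : v 0 ≠ 0 := by omega
      refine LexLT.unary_of_step (by simp [unary_zero, hu, hv]) (ih ?_ ?_ ?_)
      · simp
      · simp [unaryStep, hu, hv]; omega
      · simp [unaryStep, hu]; omega
  | succ q ih =>
    have h0 : u 0 = v 0 := hq 0 (by omega)
    induction hn : u 0 generalizing u v with
    | zero =>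
      have hv : v 0 = 0 := by omega
      refine LexLT.unary_of_step (by simp [unary_zero, hn, hv]) (ih ?_ ?_)
      · intro k hk
        simpa [unaryStep, hn, hv, dropSeq] using hq (1 + k) (by omega)
      · simpa [unaryStep, hn, hv, dropSeq, Nat.add_comm 1 q] using hlt
    | succ n ihn =>
      have hu : u 0 ≠ 0 := by omega
      have hv : v 0 ≠ 0 := by omega
      refine LexLT.unary_of_step (by simp [unary_zero, hu, hv]) (ihn ?_ ?_ ?_ ?_)
      · intro k hk
        rcases Nat.eq_zero_or_pos k with rfl | hk0
        · simp [unaryStep, hu, hv]; omega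
        · simpa [unaryStep, hu, hv, Function.update_of_ne hk0.ne'] using hq k hk
      · simpa [unaryStep, hu, hv] using hlt
      · simp [unaryStep, hu, hv]; omega
      · simp [unaryStep, hu]; omega

lemma lexLE_unary_iff {u v : ℕ → ℕ} : LexLE (unary u) (unary v) ↔ LexLE u v := by
  constructor
  · intro h
    rw [lexLE_iff_not_lexLT] at h ⊢
    exact fun h' => h h'.unary
  · intro h
    rcases h.eq_or_lexLT with rfl | h
    · exact lexLE_refl _
    · exact h.unary.lexLE

lemma unary_apply_of_lt {u : ℕ → ℕ} {i : ℕ} (h : i < u 0) : unary u i = 1 := by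
  induction i generalizing u with
  | zero => simp [unary_zero, h.ne']
  | succ i ih =>
    have hu : u 0 ≠ 0 := by omega
    rw [unary_succ]
    refine ih ?_
    simp [unaryStep, hu]; omega

lemma unary_apply_head (u : ℕ → ℕ) : unary u (u 0) = 0 := by
  induction hn : u 0 generalizing u with
  | zero => simp [unary_zero, hn]
  | succ n ih =>
    rw [unary_succ]
    refine ih _ ?_
    simp [unaryStep, hn]

lemma unary_le_one (u : ℕ → ℕ) (m : ℕ) : unary u m ≤ 1 := by
  unfold unary; split_ifs <;> simp

/-- `g` dominates all of its own tails. -/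
def IsTailMax (g : ℕ → ℕ) : Prop := ∀ k, LexLE (dropSeq k g) g

lemma lexLE_dropSeq_unaryStep {u g : ℕ → ℕ} (h : ∀ k, LexLE (dropSeq k u) g) (k : ℕ) :
    LexLE (dropSeq k (unaryStep u)) g := by
  by_cases hu : u 0 = 0
  · have : dropSeq k (unaryStep u) = dropSeq (k + 1) u := by
      funext i
      simp only [unaryStep, hu, if_true, dropSeq]
      congr 1; omega
    rw [this]
    exact h _
  · have h0 : u 0 ≤ g 0 := by simpa [dropSeq] using h 0 0 (by simp)
    rcases Nat.eq_zero_or_pos k with rfl | hk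
    · refine LexLT.lexLE ⟨0, by simp, ?_⟩
      simp [dropSeq, unaryStep, hu]; omega
    · have : dropSeq k (unaryStep u) = dropSeq k u := by
        funext i
        have : k + i ≠ 0 := by omega
        simp [unaryStep, hu, dropSeq, Function.update_of_ne this]
      rw [this]
      exact h k

lemma IsTailMax.unary {g : ℕ → ℕ} (hg : IsTailMax g) : IsTailMax (unary g) := by
  intro m
  rw [dropSeq_unary, lexLE_unary_iff]
  have key : ∀ m k, LexLE (dropSeq k (unaryStep^[m] g)) g := by
    intro m
    induction m with
    | zero => exact hg
    | succ m ih =>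
      rw [Function.iterate_succ_apply']
      exact lexLE_dropSeq_unaryStep ih
  exact dropSeq_zero (unaryStep^[m] g) ▸ key m 0

lemma exists_dropSeq_iterate_unaryStep (g : ℕ → ℕ) (m : ℕ) :
    ∃ k, dropSeq 1 (unaryStep^[m] g) = dropSeq k g := by
  induction m with
  | zero => exact ⟨1, rfl⟩
  | succ m ih =>
    obtain ⟨k, hk⟩ := ih
    rw [Function.iterate_succ_apply']
    by_cases h : (unaryStep^[m] g) 0 = 0
    · refine ⟨k + 1, ?_⟩
      funext i
      have := congrFun hk (1 + i)
      simp only [dropSeq, unaryStep, h, if_true] at this ⊢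
      rw [this]
      congr 1; omega
    · refine ⟨k, ?_⟩
      rw [← hk]
      funext i
      simp [dropSeq, unaryStep, h]

lemma exists_unary_ne_zero {g : ℕ → ℕ} (hg : ∀ N, ∃ k ≥ N, g k ≠ 0) (N : ℕ) :
    ∃ k ≥ N, unary g k ≠ 0 := by
  by_contra! h
  have hz : ∀ m ≥ N, (unaryStep^[m] g) 0 = 0 := by
    intro m hm
    have := h m hm
    unfold unary at this
    by_contra h0
    simp [h0] at this
  have hd : ∀ s, unaryStep^[N + s] g = dropSeq s (unaryStep^[N] g) := by
    intro s
    induction s with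
    | zero => funext i; simp [dropSeq]
    | succ s ih =>
      rw [← add_assoc, Function.iterate_succ_apply']
      funext i
      simp only [unaryStep, hz (N + s) (by omega), if_true, ih, dropSeq,
        add_assoc]
  obtain ⟨k, hk⟩ := exists_dropSeq_iterate_unaryStep g N
  obtain ⟨m, hm, hne⟩ := hg k
  apply hne
  have h1 := congrFun hk (m - k)
  have h2 := hz (N + (1 + (m - k))) (by omega)
  rw [hd] at h2
  simp only [dropSeq, add_zero] at h1 h2
  rw [h2] at h1
  rw [h1]
  congr 1; omega

/-! ### Numerical description of beta-shifts -/

/-- The partial sum `∑_{k<m} u_k β^{-k-1}`. -/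
noncomputable def partialValue (β : ℝ) (u : ℕ → ℕ) (m : ℕ) : ℝ :=
  ∑ k ∈ Finset.range m, (u k : ℝ) / β ^ (k + 1)

lemma partialValue_zero (β : ℝ) (u : ℕ → ℕ) : partialValue β u 0 = 0 := by
  simp [partialValue]

lemma partialValue_succ (β : ℝ) (u : ℕ → ℕ) (m : ℕ) :
    partialValue β u (m + 1) = partialValue β u m + (u m : ℝ) / β ^ (m + 1) :=
  Finset.sum_range_succ _ _

lemma partialValue_add (β : ℝ) (u : ℕ → ℕ) (q m : ℕ) :
    partialValue β u (q + m) =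
      partialValue β u q + partialValue β (dropSeq q u) m / β ^ q := by
  simp only [partialValue, Finset.sum_range_add, Finset.sum_div, dropSeq, div_div]
  congr 1
  refine Finset.sum_congr rfl fun k _ => ?_
  congr 1
  ring

lemma mul_partialValue_succ {β : ℝ} (hβ : 1 < β) (u : ℕ → ℕ) (m : ℕ) :
    β * partialValue β u (m + 1) = u 0 + partialValue β (dropSeq 1 u) m := by
  have h0 : β ≠ 0 := by positivity
  rw [Nat.add_comm m 1, partialValue_add, partialValue_succ, partialValue_zero]
  field_simp
  ring

lemma partialValue_congr {β : ℝ} {u v : ℕ → ℕ} {m : ℕ} (h : ∀ k < m, u k = v k) :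
    partialValue β u m = partialValue β v m :=
  Finset.sum_congr rfl fun k hk => by rw [h k (Finset.mem_range.1 hk)]

lemma partialValue_nonneg {β : ℝ} (hβ : 1 < β) (u : ℕ → ℕ) (m : ℕ) :
    0 ≤ partialValue β u m :=
  Finset.sum_nonneg fun k _ => by positivity

lemma partialValue_mono {β : ℝ} (hβ : 1 < β) (u : ℕ → ℕ) : Monotone (partialValue β u) :=
  monotone_nat_of_le_succ fun m => by
    rw [partialValue_succ]
    have : (0 : ℝ) ≤ (u m : ℝ) / β ^ (m + 1) := by positivity
    linarith

lemma dropSeq_rightTail (x : Seq) (i : ℤ) (k : ℕ) :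
    dropSeq k (rightTail x i) = rightTail x (i + k) := by
  funext j
  simp only [dropSeq, rightTail]
  congr 1
  push_cast
  ring

lemma betaR_nonneg {β t : ℝ} (ht : 0 ≤ t) (n : ℕ) : 0 ≤ betaR β t n := by
  cases n with
  | zero => exact ht
  | succ n => exact Int.fract_nonneg _

lemma betaDigit_cast {β t : ℝ} (hβ : 1 < β) (ht : 0 ≤ t) (n : ℕ) :
    (betaDigit β t n : ℝ) = β * betaR β t n - betaR β t (n + 1) := by
  have h0 : 0 ≤ β * betaR β t n := mul_nonneg (by linarith) (betaR_nonneg ht n)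
  have h1 : ((betaDigit β t n : ℤ)) = ⌊β * betaR β t n⌋ :=
    Int.toNat_of_nonneg (Int.floor_nonneg.2 h0)
  have h2 : (betaDigit β t n : ℝ) = (⌊β * betaR β t n⌋ : ℝ) := by exact_mod_cast h1
  rw [h2, betaR, Int.fract]
  ring

lemma partialValue_betaDigit_le {β t : ℝ} (hβ : 1 < β) (ht : 0 ≤ t) (N m : ℕ) :
    partialValue β (fun j => betaDigit β t (N + j)) m ≤ betaR β t N := by
  have h0 : 0 < β := by linarith
  have key : partialValue β (fun j => betaDigit β t (N + j)) m + betaR β t (N + m) / β ^ m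
      = betaR β t N := by
    induction m with
    | zero => simp [partialValue_zero]
    | succ m ih =>
      rw [← ih, partialValue_succ, betaDigit_cast hβ ht, ← add_assoc]
      field_simp
      ring
  have : 0 ≤ betaR β t (N + m) / β ^ m := div_nonneg (betaR_nonneg ht _) (by positivity)
  linarith

lemma betaDigit_partialValue {β : ℝ} (hβ : 1 < β) (u : ℕ → ℕ) (m : ℕ)
    (hu : ∀ k s, k + s ≤ m → partialValue β (dropSeq k u) s < 1) {j : ℕ} (hj : j < m) :
    betaDigit β (partialValue β u m) j = u j := by
  have hmul : ∀ j < m, β * partialValue β (dropSeq j u) (m - j) =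
      u j + partialValue β (dropSeq (j + 1) u) (m - (j + 1)) := by
    intro j hj
    obtain ⟨s, rfl⟩ : ∃ s, m = j + (s + 1) := ⟨m - j - 1, by omega⟩
    rw [show j + (s + 1) - j = s + 1 by omega, show j + (s + 1) - (j + 1) = s by omega,
      mul_partialValue_succ hβ]
    congr 2
    funext i
    simp only [dropSeq, add_assoc]
  have hr : ∀ j ≤ m, betaR β (partialValue β u m) j = partialValue β (dropSeq j u) (m - j) := by
    intro j hj
    induction j with
    | zero => simp [betaR]
    | succ j ih =>
      rw [betaR, ih (by omega), hmul j (by omega), Int.fract_natCast_add]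
      exact Int.fract_eq_self.2 ⟨partialValue_nonneg hβ _ _, hu _ _ (by omega)⟩
  rw [betaDigit, hr j hj.le, hmul j hj, Int.floor_natCast_add,
    Int.floor_eq_zero_iff.2 ⟨partialValue_nonneg hβ _ _, hu _ _ (by omega)⟩]
  simp

lemma mem_betaShift_iff_partialValue {β : ℝ} (hβ : 1 < β) {x : Seq} :
    x ∈ betaShift β ↔ ∀ i m, partialValue β (rightTail x i) m < 1 := by
  constructor
  · intro hx i m
    obtain ⟨t, ht, n₀, m', hw⟩ := hx (i - 1) (m + 1)
    have hm : m + 1 = m' := by simpa [wordAt] using congrArg List.length hw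
    subst hm
    have hf := List.ofFn_injective hw
    have hd : ∀ k < m, rightTail x i k = betaDigit β t (n₀ + 1 + k) := by
      intro k hk
      have := congrFun hf ⟨k + 1, by omega⟩
      simp only at this
      rw [show n₀ + 1 + k = n₀ + (k + 1) by ring, ← this, rightTail]
      congr 1
      push_cast
      ring
    rw [partialValue_congr hd]
    exact (partialValue_betaDigit_le hβ ht.1 _ _).trans_lt (Int.fract_lt_one _)
  · intro hx i m
    refine ⟨partialValue β (rightTail x i) m, ⟨partialValue_nonneg hβ _ _, (hx i m).le⟩,
      0, m, ?_⟩
    unfold wordAt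
    congr 1
    funext j
    rw [Nat.zero_add, betaDigit_partialValue hβ _ _ _ j.2]
    · rfl
    · intro k s _
      rw [dropSeq_rightTail]
      exact hx _ _

/-- A one-sided sequence which is the infinite expansion of `1` in base `β` and
dominates its own tails. -/
structure IsExpansionOfOne (β : ℝ) (g : ℕ → ℕ) : Prop where
  tailMax : IsTailMax g
  frequently_ne_zero : ∀ N, ∃ k ≥ N, g k ≠ 0
  hasSum : HasSum (fun k => (g k : ℝ) / β ^ (k + 1)) 1

lemma IsExpansionOfOne.partialValue_self_lt {β : ℝ} (hβ : 1 < β) {g : ℕ → ℕ}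
    (hg : IsExpansionOfOne β g) (m : ℕ) : partialValue β g m < 1 := by
  obtain ⟨k, hk, hne⟩ := hg.frequently_ne_zero m
  have h1 : partialValue β g (k + 1) ≤ 1 :=
    sum_le_hasSum _ (fun i _ => by positivity) hg.hasSum
  have h2 : 0 < (g k : ℝ) / β ^ (k + 1) := by
    have : 0 < g k := by omega
    positivity
  have h3 := partialValue_mono hβ g hk
  rw [partialValue_succ] at h1
  linarith

lemma IsExpansionOfOne.partialValue_lt {β : ℝ} (hβ : 1 < β) {g : ℕ → ℕ}
    (hg : IsExpansionOfOne β g) {u : ℕ → ℕ} (hu : ∀ k, LexLE (dropSeq k u) g) (m : ℕ) :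
    partialValue β u m < 1 := by
  have h0 : 0 < β := by linarith
  induction m using Nat.strong_induction_on generalizing u with
  | _ m ih =>
    by_cases heq : ∀ k < m, u k = g k
    · rw [partialValue_congr heq]
      exact hg.partialValue_self_lt hβ m
    · push Not at heq
      classical
      obtain ⟨q, hq, hmin⟩ : ∃ q, (q < m ∧ u q ≠ g q) ∧ ∀ k < q, ¬ (k < m ∧ u k ≠ g k) :=
        ⟨Nat.find heq, Nat.find_spec heq, fun k hk => Nat.find_min heq hk⟩
      have hagree : ∀ k < q, u k = g k := by
        intro k hk
        by_contra hne
        exact hmin k hk ⟨by omega, hne⟩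
      have hlt : u q < g q := by
        have := hu 0
        rw [dropSeq_zero] at this
        exact lt_of_le_of_ne (this q hagree) hq.2
      obtain ⟨s, rfl⟩ : ∃ s, m = (q + 1) + s := ⟨m - (q + 1), by omega⟩
      have hs : partialValue β (dropSeq (q + 1) u) s < 1 := by
        refine ih s (by omega) fun k => ?_
        have : dropSeq k (dropSeq (q + 1) u) = dropSeq (q + 1 + k) u := by
          funext i; simp only [dropSeq, add_assoc]
        rw [this]
        exact hu _
      have h1 := hg.partialValue_self_lt hβ (q + 1)
      rw [partialValue_add, partialValue_succ, partialValue_congr hagree]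
      rw [partialValue_succ] at h1
      have hpow : 0 < β ^ (q + 1) := by positivity
      have h2 : ((u q : ℝ) + partialValue β (dropSeq (q + 1) u) s) / β ^ (q + 1)
          ≤ (g q : ℝ) / β ^ (q + 1) := by
        have : (u q : ℝ) + 1 ≤ g q := by exact_mod_cast hlt
        gcongr
        linarith
      rw [add_div] at h2
      linarith

lemma IsExpansionOfOne.one_le_add {β : ℝ} (hβ : 1 < β) {g : ℕ → ℕ}
    (hg : IsExpansionOfOne β g) (q : ℕ) : 1 ≤ partialValue β g q + 1 / β ^ q := by
  have hlim : Filter.Tendsto (fun m => partialValue β g (m + q)) Filter.atTop (nhds 1) :=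
    (Filter.tendsto_add_atTop_iff_nat q).2 hg.hasSum.tendsto_sum_nat
  refine le_of_tendsto' hlim fun m => ?_
  rw [Nat.add_comm, partialValue_add]
  have hpow : 0 < β ^ q := by positivity
  have h1 : partialValue β (dropSeq q g) m < 1 := by
    refine hg.partialValue_lt hβ (fun k => ?_) m
    have : dropSeq k (dropSeq q g) = dropSeq (q + k) g := by
      funext i; simp only [dropSeq, add_assoc]
    rw [this]
    exact hg.tailMax _
  gcongr

lemma IsExpansionOfOne.mem_betaShift_iff {β : ℝ} (hβ : 1 < β) {g : ℕ → ℕ}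
    (hg : IsExpansionOfOne β g) {x : Seq} :
    x ∈ betaShift β ↔ ∀ i, LexLE (rightTail x i) g := by
  rw [mem_betaShift_iff_partialValue hβ]
  constructor
  · intro hx i q hq
    by_contra! hlt
    have h1 := hx i (q + 1)
    have h2 := hg.one_le_add hβ (q + 1)
    rw [partialValue_succ] at h1 h2
    rw [partialValue_congr hq] at h1
    have h3 : ((g q : ℝ) + 1) / β ^ (q + 1) ≤ (rightTail x i q : ℝ) / β ^ (q + 1) := by
      have : (g q : ℝ) + 1 ≤ rightTail x i q := by exact_mod_cast hlt
      gcongr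
    rw [add_div] at h3
    linarith
  · intro hx i m
    refine hg.partialValue_lt hβ (fun k => ?_) m
    rw [dropSeq_rightTail]
    exact hx _

/-! ### Existence of expansions of one -/

/-- Remainders of the quasi-greedy expansion of `t` in base `β`. -/
noncomputable def quasiRem (β t : ℝ) : ℕ → ℝ
  | 0 => t
  | n + 1 => β * quasiRem β t n - (⌈β * quasiRem β t n⌉ - 1)

/-- Digits of the quasi-greedy expansion of `t` in base `β`. -/
noncomputable def quasiDigit (β t : ℝ) (n : ℕ) : ℕ := (⌈β * quasiRem β t n⌉ - 1).toNat

lemma quasiRem_pos_le {β t : ℝ} (ht : 0 < t) (ht1 : t ≤ 1) (n : ℕ) :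
    0 < quasiRem β t n ∧ quasiRem β t n ≤ 1 := by
  cases n with
  | zero => exact ⟨ht, ht1⟩
  | succ n =>
    have h1 := Int.le_ceil (β * quasiRem β t n)
    have h2 := Int.ceil_lt_add_one (β * quasiRem β t n)
    simp only [quasiRem]
    constructor <;> linarith

lemma quasiDigit_cast {β t : ℝ} (hβ : 1 < β) (ht : 0 < t) (ht1 : t ≤ 1) (n : ℕ) :
    (quasiDigit β t n : ℝ) = β * quasiRem β t n - quasiRem β t (n + 1) := by
  have h0 : 0 < β * quasiRem β t n := mul_pos (by linarith) (quasiRem_pos_le ht ht1 n).1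
  have h1 : (0 : ℤ) ≤ ⌈β * quasiRem β t n⌉ - 1 := by
    have := Int.ceil_pos.2 h0
    omega
  have h2 : ((quasiDigit β t n : ℤ)) = ⌈β * quasiRem β t n⌉ - 1 := Int.toNat_of_nonneg h1
  have h3 : (quasiDigit β t n : ℝ) = (⌈β * quasiRem β t n⌉ : ℝ) - 1 := by exact_mod_cast h2
  rw [h3, quasiRem]
  ring

lemma quasiRem_add (β t : ℝ) (k n : ℕ) :
    quasiRem β t (k + n) = quasiRem β (quasiRem β t k) n := by
  induction n with
  | zero => rfl
  | succ n ih => rw [← add_assoc, quasiRem, quasiRem, ih]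

lemma dropSeq_quasiDigit (β t : ℝ) (k : ℕ) :
    dropSeq k (quasiDigit β t) = quasiDigit β (quasiRem β t k) := by
  funext n
  simp only [dropSeq, quasiDigit, quasiRem_add]

lemma lexLE_quasiDigit {β s t : ℝ} (hβ : 1 < β) (hs : 0 < s) (hst : s ≤ t) (ht : t ≤ 1) :
    LexLE (quasiDigit β s) (quasiDigit β t) := by
  intro q hq
  have hr : ∀ n ≤ q, quasiRem β s n ≤ quasiRem β t n := by
    intro n hn
    induction n with
    | zero => exact hst
    | succ n ih =>
      have h1 := quasiDigit_cast hβ hs (hst.trans ht) n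
      have h2 := quasiDigit_cast hβ (hs.trans_le hst) ht n
      rw [hq n (by omega)] at h1
      have := mul_le_mul_of_nonneg_left (ih (by omega)) (by linarith : 0 ≤ β)
      linarith
  unfold quasiDigit
  have := mul_le_mul_of_nonneg_left (hr q le_rfl) (by linarith : 0 ≤ β)
  exact Int.toNat_le_toNat (sub_le_sub_right (Int.ceil_le_ceil this) 1)

lemma partialValue_quasiDigit {β t : ℝ} (hβ : 1 < β) (ht : 0 < t) (ht1 : t ≤ 1) (m : ℕ) :
    partialValue β (quasiDigit β t) m = t - quasiRem β t m / β ^ m := by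
  have h0 : 0 < β := by linarith
  induction m with
  | zero => simp [partialValue_zero, quasiRem]
  | succ m ih =>
    rw [partialValue_succ, ih, quasiDigit_cast hβ ht ht1]
    field_simp
    ring

lemma isExpansionOfOne_quasiDigit {β : ℝ} (hβ : 1 < β) :
    IsExpansionOfOne β (quasiDigit β 1) := by
  have h0 : 0 < β := by linarith
  have hrem := quasiRem_pos_le (β := β) one_pos le_rfl
  refine ⟨fun k => ?_, fun N => ?_, ?_⟩
  · rw [dropSeq_quasiDigit]
    exact lexLE_quasiDigit hβ (hrem k).1 (hrem k).2 le_rfl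
  · by_contra! h
    have hpow : ∀ s, quasiRem β 1 (N + s) = β ^ s * quasiRem β 1 N := by
      intro s
      induction s with
      | zero => simp
      | succ s ih =>
        have h1 := quasiDigit_cast hβ one_pos le_rfl (N + s)
        rw [h (N + s) (by omega), ih] at h1
        push_cast at h1
        rw [← add_assoc, pow_succ]
        linarith
    obtain ⟨s, hs⟩ := pow_unbounded_of_one_lt (1 / quasiRem β 1 N) hβ
    have h1 := (hrem (N + s)).2
    rw [div_lt_iff₀ (hrem N).1, ← hpow] at hs
    linarith
  · rw [hasSum_iff_tendsto_nat_of_nonneg (fun i => by positivity)]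
    have hz : Filter.Tendsto (fun m => quasiRem β 1 m / β ^ m) Filter.atTop (nhds 0) := by
      refine squeeze_zero (fun m => div_nonneg (hrem m).1.le (by positivity))
        (fun m => (div_le_div_of_nonneg_right (hrem m).2 (by positivity)))
        (g := fun m => 1 / β ^ m) ?_
      have := tendsto_pow_atTop_nhds_zero_of_lt_one (r := β⁻¹) (by positivity)
        (inv_lt_one_of_one_lt₀ hβ)
      simpa using this
    have := (tendsto_const_nhds (x := (1 : ℝ))).sub hz
    rw [sub_zero] at this
    exact this.congr fun m => (partialValue_quasiDigit hβ one_pos le_rfl m).symm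

/-- A non-constant-`1` binary sequence with infinitely many ones that dominates
its own tails is the expansion of one in some base between `1` and `2`. -/
lemma exists_isExpansionOfOne {g : ℕ → ℕ} (htail : IsTailMax g)
    (hne : ∀ N, ∃ k ≥ N, g k ≠ 0) (hle : ∀ k, g k ≤ 1) {z : ℕ} (hz : g z = 0) :
    ∃ β : ℝ, 1 < β ∧ β < 2 ∧ IsExpansionOfOne β g := by
  have hbound : ∀ (s r : ℝ), 0 ≤ s → s ≤ r → ∀ k, (g k : ℝ) * s ^ (k + 1) ≤ r ^ (k + 1) := by
    intro s r hs hsr k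
    have h1 : (g k : ℝ) ≤ 1 := by exact_mod_cast hle k
    calc (g k : ℝ) * s ^ (k + 1) ≤ 1 * s ^ (k + 1) := by gcongr
      _ ≤ r ^ (k + 1) := by rw [one_mul]; gcongr
  have hgeom : ∀ r : ℝ, 0 ≤ r → r < 1 → Summable fun k : ℕ => r ^ (k + 1) := fun r h0 h1 =>
    (summable_nat_add_iff 1).2 (summable_geometric_of_lt_one h0 h1)
  have hsummable : ∀ s : ℝ, 0 ≤ s → s < 1 → Summable fun k => (g k : ℝ) * s ^ (k + 1) :=
    fun s h0 h1 => (hgeom s h0 h1).of_nonneg_of_le (fun k => by positivity)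
      (hbound s s h0 le_rfl)
  set F : ℝ → ℝ := fun s => ∑' k, (g k : ℝ) * s ^ (k + 1)
  have hhalf : F (1 / 2) < 1 := by
    have h2 : HasSum (fun k : ℕ => (1 / 2 : ℝ) ^ (k + 1)) 1 := by
      have := hasSum_geometric_two.mul_left (1 / 2 : ℝ)
      simpa only [← pow_succ', one_div, inv_mul_cancel₀ (two_ne_zero' ℝ)] using this
    refine lt_of_lt_of_eq ?_ h2.tsum_eq
    refine Summable.tsum_lt_tsum (i := z) (hbound _ _ (by norm_num) le_rfl) ?_
      (hsummable _ (by norm_num) (by norm_num)) h2.summable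
    rw [hz]
    push_cast
    rw [zero_mul]
    positivity
  obtain ⟨k, -, hk⟩ := hne 0
  obtain ⟨l, hl, hl'⟩ := hne (k + 1)
  obtain ⟨r, hr, hr1, hFr⟩ : ∃ r : ℝ, 1 / 2 < r ∧ r < 1 ∧ 1 < F r := by
    have hcont : Continuous fun s : ℝ => s ^ (k + 1) + s ^ (l + 1) := by fun_prop
    have hev : ∀ᶠ s in nhdsWithin (1 : ℝ) (Set.Iio 1), 1 < s ^ (k + 1) + s ^ (l + 1) :=
      (hcont.continuousAt.tendsto.mono_left nhdsWithin_le_nhds).eventually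
        (lt_mem_nhds (by norm_num))
    have hev2 : ∀ᶠ s in nhdsWithin (1 : ℝ) (Set.Iio 1), s ∈ Set.Ioo (1 / 2 : ℝ) 1 :=
      Ioo_mem_nhdsLT (by norm_num)
    obtain ⟨r, h1, h2, h3⟩ := (hev.and hev2).exists
    refine ⟨r, h2, h3, h1.trans_le ?_⟩
    have hr0 : 0 ≤ r := by linarith
    have hkl : k ≠ l := by omega
    have hk1 : g k = 1 := by have := hle k; omega
    have hl1 : g l = 1 := by have := hle l; omega
    have := (hsummable r hr0 h3).sum_le_tsum {k, l} (fun i _ => by positivity)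
    rwa [Finset.sum_pair hkl, hk1, hl1, Nat.cast_one, one_mul, one_mul] at this
  have hFcont : ContinuousOn F (Set.Icc (1 / 2) r) := by
    refine continuousOn_tsum (fun k => by fun_prop) (hgeom r (by linarith) hr1) ?_
    intro k s hs
    have hs0 : 0 ≤ s := by linarith [hs.1]
    rw [Real.norm_of_nonneg (by positivity)]
    exact hbound s r hs0 hs.2 k
  obtain ⟨s, hs, hFs⟩ := intermediate_value_Ioo hr.le hFcont ⟨hhalf, hFr⟩
  have hs0 : 0 < s := by linarith [hs.1]
  have hs1 : s < 1 := hs.2.trans hr1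
  refine ⟨s⁻¹, (one_lt_inv₀ hs0).2 hs1, ?_, htail, hne, ?_⟩
  · rw [inv_lt_comm₀ hs0 two_pos]
    linarith [hs.1]
  · have := (hsummable s hs0.le hs1).hasSum
    rw [show ∑' k, (g k : ℝ) * s ^ (k + 1) = 1 from hFs] at this
    simpa [div_eq_mul_inv] using this

/-! ### Substitutions on biinfinite sequences -/

lemma mem_translate_iff {X : Set Seq} (hX : ∀ x, x ∈ X ↔ shift x ∈ X) (x : Seq) (j : ℤ) :
    (fun i => x (i + j)) ∈ X ↔ x ∈ X := by
  have step : ∀ j : ℤ, (fun i => x (i + (j + 1))) ∈ X ↔ (fun i => x (i + j)) ∈ X := by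
    intro j
    rw [hX (fun i => x (i + j))]
    have : shift (fun i => x (i + j)) = fun i => x (i + (j + 1)) := by
      funext i
      simp only [shift]
      congr 1
      ring
    rw [this]
  induction j with
  | zero => simp
  | succ j ih => exact (step j).trans ih
  | pred j ih =>
    have := step (-(j : ℤ) - 1)
    rw [sub_add_cancel] at this
    exact this.symm.trans ih

lemma exists_block {p : ℤ → ℤ} (hp : ∀ k, p k < p (k + 1)) (m : ℤ) :
    ∃ k, p k ≤ m ∧ m < p (k + 1) := by
  have hmono : StrictMono p := strictMono_int_of_lt_succ hp
  have hlow : ∀ n : ℕ, p (-n) ≤ p 0 - n := by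
    intro n
    induction n with
    | zero => simp
    | succ n ih =>
      have := hp (-((n + 1 : ℕ) : ℤ))
      rw [show -((n + 1 : ℕ) : ℤ) + 1 = -(n : ℤ) by push_cast; ring] at this
      push_cast at this ⊢
      linarith
  have hhigh : ∀ n : ℕ, p 0 + n ≤ p n := by
    intro n
    induction n with
    | zero => simp
    | succ n ih =>
      have := hp n
      push_cast
      linarith
  obtain ⟨k, hk, hmax⟩ := Int.exists_greatest_of_bdd (P := fun k => p k ≤ m)
    ⟨(m - p 0).toNat + 1, fun z hz => by
      by_contra! hlt
      have h1 := hhigh ((m - p 0).toNat + 1)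
      have h2 := hmono hlt
      push_cast at h1
      have := Int.self_le_toNat (m - p 0)
      linarith⟩
    ⟨-((p 0 - m).toNat : ℤ), (hlow _).trans (by
      have := Int.self_le_toNat (p 0 - m)
      linarith)⟩
  refine ⟨k, hk, ?_⟩
  by_contra! h
  have := hmax (k + 1) h
  omega

lemma block_unique {p : ℤ → ℤ} (hp : ∀ k, p k < p (k + 1)) {m k l : ℤ}
    (hk : p k ≤ m) (hk' : m < p (k + 1)) (hl : p l ≤ m) (hl' : m < p (l + 1)) : k = l := by
  have hmono : StrictMono p := strictMono_int_of_lt_succ hp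
  have h1 := hmono.lt_iff_lt.1 (hk.trans_lt hl')
  have h2 := hmono.lt_iff_lt.1 (hl.trans_lt hk')
  omega

lemma exists_blockwise {α : Type*} {p : ℤ → ℤ} (hp : ∀ k, p k < p (k + 1))
    (F : ℤ → ℕ → α) : ∃ y : ℤ → α, ∀ k (i : ℕ), p k + i < p (k + 1) → y (p k + i) = F k i := by
  choose b hb hb' using exists_block hp
  refine ⟨fun m => F (b m) (m - p (b m)).toNat, fun k i hi => ?_⟩
  have : b (p k + i) = k := block_unique hp (hb _) (hb' _) (by omega) hi
  simp [this]

lemma exists_of_increments (d : ℤ → ℤ) (a : ℤ) :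
    ∃ p : ℤ → ℤ, p 0 = a ∧ ∀ k, p (k + 1) = p k + d k := by
  let e : Equiv.Perm (ℤ × ℤ) :=
    { toFun := fun w => (w.1 + 1, w.2 + d w.1)
      invFun := fun w => (w.1 - 1, w.2 - d (w.1 - 1))
      left_inv := fun w => by simp
      right_inv := fun w => by simp }
  have hstep : ∀ k : ℤ, (e ^ (k + 1)) (0, a) = e ((e ^ k) (0, a)) := by
    intro k
    rw [add_comm, zpow_one_add, Equiv.Perm.mul_apply]
  have hfst : ∀ k : ℤ, ((e ^ k) (0, a)).1 = k := by
    intro k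
    have hs : ∀ k : ℤ, ((e ^ (k + 1)) (0, a)).1 = ((e ^ k) (0, a)).1 + 1 := fun k => by
      rw [hstep]; rfl
    induction k with
    | zero => simp
    | succ k ih => rw [hs, ih]
    | pred k ih =>
      have := hs (-(k : ℤ) - 1)
      rw [sub_add_cancel, ih] at this
      omega
  refine ⟨fun k => ((e ^ k) (0, a)).2, by simp, fun k => ?_⟩
  simp only [hstep]
  change ((e ^ k) (0, a)).2 + d ((e ^ k) (0, a)).1 = _
  rw [hfst]

/-- `y` is obtained from `x` by replacing each letter `j` by the word
`c j 0, …, c j (ℓ j)`; the word replacing `x k` starts at position `p k`. -/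
def IsSubstitution (ℓ : ℕ → ℕ) (c : ℕ → ℕ → ℕ) (x y : Seq) (p : ℤ → ℤ) : Prop :=
  (∀ k, p (k + 1) = p k + ℓ (x k) + 1) ∧ ∀ k, ∀ i ≤ ℓ (x k), y (p k + i) = c (x k) i

/-- The shift space generated by applying the substitution
`j ↦ c j 0, …, c j (ℓ j)` to the points of `X`. -/
def substShift (X : Set Seq) (ℓ : ℕ → ℕ) (c : ℕ → ℕ → ℕ) : Set Seq :=
  {y | ∃ x ∈ X, ∃ p, IsSubstitution ℓ c x y p}

lemma IsSubstitution.lt_succ {ℓ : ℕ → ℕ} {c : ℕ → ℕ → ℕ} {x y : Seq} {p : ℤ → ℤ}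
    (h : IsSubstitution ℓ c x y p) (k : ℤ) : p k < p (k + 1) := by
  rw [h.1]; omega

lemma IsSubstitution.exists_eq_add {ℓ : ℕ → ℕ} {c : ℕ → ℕ → ℕ} {x y : Seq} {p : ℤ → ℤ}
    (h : IsSubstitution ℓ c x y p) (m : ℤ) : ∃ k, ∃ i : ℕ, i ≤ ℓ (x k) ∧ m = p k + i := by
  obtain ⟨k, hk, hk'⟩ := exists_block h.lt_succ m
  rw [h.1] at hk'
  exact ⟨k, (m - p k).toNat, by omega, by omega⟩

lemma exists_normalized_of_mem_substShift {X : Set Seq} (hX : ∀ x, x ∈ X ↔ shift x ∈ X)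
    {ℓ : ℕ → ℕ} {c : ℕ → ℕ → ℕ} {y : Seq} (hy : y ∈ substShift X ℓ c) :
    ∃ x ∈ X, ∃ p, (p 0 ≤ 0 ∧ 0 < p 1) ∧ IsSubstitution ℓ c x y p := by
  obtain ⟨x, hx, p, hp⟩ := hy
  obtain ⟨j, hj, hj'⟩ := exists_block hp.lt_succ 0
  refine ⟨fun i => x (i + j), (mem_translate_iff hX x j).2 hx, fun i => p (i + j),
    ⟨by simpa using hj, by simpa [add_comm] using hj'⟩, fun k => ?_, fun k => hp.2 _⟩
  rw [← hp.1, add_right_comm]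

lemma IsSubstitution.translate {ℓ : ℕ → ℕ} {c : ℕ → ℕ → ℕ} {x y : Seq} {p : ℤ → ℤ}
    (h : IsSubstitution ℓ c x y p) (j : ℤ) :
    IsSubstitution ℓ c x (fun i => y (i + j)) (fun k => p k - j) := by
  refine ⟨fun k => by simp only [h.1]; ring, fun k i hi => ?_⟩
  rw [← h.2 k i hi]
  simp only
  congr 1
  ring

lemma mem_substShift_iff_shift (X : Set Seq) (ℓ : ℕ → ℕ) (c : ℕ → ℕ → ℕ) (y : Seq) :
    y ∈ substShift X ℓ c ↔ shift y ∈ substShift X ℓ c := by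
  constructor
  · rintro ⟨x, hx, p, hp⟩
    exact ⟨x, hx, _, hp.translate 1⟩
  · rintro ⟨x, hx, p, hp⟩
    refine ⟨x, hx, fun k => p k - -1, ?_⟩
    simpa only [shift, neg_add_cancel_right] using hp.translate (-1)

lemma IsSubstitution.abs_le {ℓ : ℕ → ℕ} {c : ℕ → ℕ → ℕ} {x y : Seq} {p : ℤ → ℤ}
    (h : IsSubstitution ℓ c x y p) (h0 : p 0 ≤ 0 ∧ 0 < p 1) {L : ℕ} (hL : ∀ k, ℓ (x k) ≤ L)
    (k : ℤ) : |p k| ≤ (L + 1) * (|k| + 1) := by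
  induction k with
  | zero =>
    have h1 := h.1 0
    have h2 := hL 0
    rw [zero_add] at h1
    rw [_root_.abs_le]
    constructor <;> simp <;> omega
  | succ k ih =>
    have h1 := h.1 k
    have h2 := hL k
    rw [abs_of_nonneg (by positivity : (0 : ℤ) ≤ k)] at ih
    rw [abs_of_nonneg (by positivity : (0 : ℤ) ≤ (k : ℤ) + 1)]
    rw [_root_.abs_le] at ih ⊢
    have : (ℓ (x k) : ℤ) ≤ L := by exact_mod_cast h2
    constructor <;> nlinarith
  | pred k ih =>
    have h1 := h.1 (-(k : ℤ) - 1)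
    have h2 := hL (-(k : ℤ) - 1)
    rw [sub_add_cancel] at h1
    rw [abs_of_nonpos (by simp : -(k : ℤ) ≤ 0)] at ih
    rw [abs_of_nonpos (by omega : -(k : ℤ) - 1 ≤ 0)]
    rw [_root_.abs_le] at ih ⊢
    have : (ℓ (x (-(k : ℤ) - 1)) : ℤ) ≤ L := by exact_mod_cast h2
    constructor <;> nlinarith

lemma isClosed_substShift {A : Set ℕ} {X : Set Seq} (hX : IsSubshift A X) (ℓ : ℕ → ℕ)
    (c : ℕ → ℕ → ℕ) : IsClosed (substShift X ℓ c) := by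
  obtain ⟨hA, hclosed, hshift, hletters⟩ := hX
  obtain ⟨L, hL⟩ : ∃ L, ∀ a ∈ A, ℓ a ≤ L := by
    obtain ⟨L, hL⟩ := (hA.image ℓ).bddAbove
    exact ⟨L, fun a ha => hL ⟨a, ha, rfl⟩⟩
  let K : Set (Seq × (ℤ → ℤ)) := (Set.univ.pi fun _ => A) ×ˢ
    (Set.univ.pi fun k => Set.Icc (-((L + 1 : ℤ) * (|k| + 1))) ((L + 1) * (|k| + 1)))
  have hK : IsCompact K := (isCompact_univ_pi fun _ => hA.isCompact).prod
    (isCompact_univ_pi fun _ => isCompact_Icc)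
  have : CompactSpace K := isCompact_iff_compactSpace.1 hK
  have hx : ∀ k : ℤ, Continuous fun w : K × Seq => w.1.1.1 k := fun k => by fun_prop
  have hp : ∀ k : ℤ, Continuous fun w : K × Seq => w.1.1.2 k := fun k => by fun_prop
  have hℓ : ∀ k : ℤ, Continuous fun w : K × Seq => ℓ (w.1.1.1 k) := fun k =>
    continuous_of_discreteTopology.comp (hx k)
  have heval : Continuous fun v : Seq × ℤ => v.1 v.2 :=
    continuous_prod_of_discrete_right.2 fun n => continuous_apply n
  let T : Set (K × Seq) := {w | w.1.1.1 ∈ X ∧ IsSubstitution ℓ c w.1.1.1 w.2 w.1.1.2}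
  have hT : IsClosed T := by
    have hpos : IsClosed {w : K × Seq |
        ∀ k, w.1.1.2 (k + 1) = w.1.1.2 k + ℓ (w.1.1.1 k) + 1} := by
      simp only [Set.ofPred_forall]
      refine isClosed_iInter fun k => isClosed_eq (hp _) ?_
      exact ((hp k).add (continuous_of_discreteTopology.comp (hℓ k))).add continuous_const
    have hval : IsClosed {w : K × Seq |
        ∀ k, ∀ i ≤ ℓ (w.1.1.1 k), w.2 (w.1.1.2 k + i) = c (w.1.1.1 k) i} := by
      simp only [Set.ofPred_forall]
      refine isClosed_iInter fun k => isClosed_iInter fun i => isClosed_imp ?_ ?_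
      · exact (isOpen_discrete (Set.Ici i)).preimage (hℓ k)
      · exact isClosed_eq (heval.comp (continuous_snd.prodMk ((hp k).add continuous_const)))
          ((continuous_of_discreteTopology (f := fun j => c j i)).comp (hx k))
    exact (hclosed.preimage (by fun_prop : Continuous fun w : K × Seq => w.1.1.1)).inter
      (hpos.inter hval)
  have himage : substShift X ℓ c = Prod.snd '' T := by
    ext y
    constructor
    · intro hy
      obtain ⟨x, hx, p, h0, hp⟩ := exists_normalized_of_mem_substShift hshift hy
      refine ⟨⟨⟨(x, p), fun k _ => hletters x hx k, fun k _ => ?_⟩, y⟩, ⟨hx, hp⟩, rfl⟩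
      exact _root_.abs_le.1 (hp.abs_le h0 (fun k => hL _ (hletters x hx k)) k)
    · rintro ⟨w, ⟨hx, hp⟩, rfl⟩
      exact ⟨_, hx, _, hp⟩
  rw [himage]
  exact isClosedMap_snd_of_compactSpace T hT

lemma isSubshift_substShift {A : Set ℕ} {X : Set Seq} (hX : IsSubshift A X) (ℓ : ℕ → ℕ)
    (c : ℕ → ℕ → ℕ) :
    IsSubshift {b | ∃ j ∈ A, ∃ i ≤ ℓ j, b = c j i} (substShift X ℓ c) := by
  refine ⟨?_, isClosed_substShift hX ℓ c, mem_substShift_iff_shift X ℓ c, ?_⟩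
  · have : {b | ∃ j ∈ A, ∃ i ≤ ℓ j, b = c j i} = ⋃ j ∈ A, c j '' Set.Iic (ℓ j) := by
      ext b
      simp [eq_comm]
    rw [this]
    exact hX.1.biUnion fun j _ => (Set.finite_Iic _).image _
  · rintro y ⟨x, hx, p, hp⟩ m
    obtain ⟨k, i, hi, rfl⟩ := hp.exists_eq_add m
    exact ⟨x k, hX.2.2.2 x hx k, i, hi, hp.2 k i hi⟩

/-! ### Substitutions as iterated symbol expansions -/

/-- The letter `(j, i)` for `j < n`, encoded as a natural number. -/
def pairLetter (n j i : ℕ) : ℕ := j + n * i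

lemma pairLetter_mod {n j : ℕ} (hj : j < n) (i : ℕ) : pairLetter n j i % n = j := by
  simp [pairLetter, Nat.mod_eq_of_lt hj]

lemma pairLetter_div {n j : ℕ} (hj : j < n) (i : ℕ) : pairLetter n j i / n = i := by
  rw [pairLetter, Nat.add_mul_div_left _ _ (by omega), Nat.div_eq_of_lt hj, zero_add]

lemma pairLetter_inj {n j j' i i' : ℕ} (hj : j < n) (hj' : j' < n) :
    pairLetter n j i = pairLetter n j' i' ↔ j = j' ∧ i = i' := by
  constructor
  · intro h
    exact ⟨by rw [← pairLetter_mod hj i, h, pairLetter_mod hj'],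
      by rw [← pairLetter_div hj i, h, pairLetter_div hj']⟩
  · rintro ⟨rfl, rfl⟩; rfl

lemma mem_symbolExpansion_of_reindex {Y : Set Seq} (hY : ∀ y, y ∈ Y ↔ shift y ∈ Y)
    {a d : ℕ} {y z : Seq} (hy : y ∈ Y) {q : ℤ → ℤ}
    (hq : ∀ k, q (k + 1) = q k + if y k = a then 2 else 1) (hz : ∀ k, z (q k) = y k)
    (hd : ∀ k, y k = a → z (q k + 1) = d) : z ∈ symbolExpansion Y a d := by
  have hlt : ∀ k, q k < q (k + 1) := fun k => by rw [hq]; split_ifs <;> omega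
  obtain ⟨j, hj, hj'⟩ := exists_block hlt 0
  refine ⟨fun i => y (i + j), (mem_translate_iff hY y j).2 hy, fun i => q (i + j), ?_,
    fun k => ?_, fun k => hz _, fun k => hd _⟩
  · rw [hq] at hj'
    simp only [zero_add]
    split_ifs at hj' <;> omega
  · rw [← hq, add_right_comm]

section Expansion

variable {n : ℕ} {X : Set Seq} {ℓ : ℕ → ℕ} {j : ℕ}

lemma symbolExpansion_subset_substShift (hX : IsSubshift (Set.Iio n) X) (hj : j < n) :
    symbolExpansion (substShift X ℓ (pairLetter n)) (pairLetter n j (ℓ j))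
        (pairLetter n j (ℓ j + 1)) ⊆
      substShift X (Function.update ℓ j (ℓ j + 1)) (pairLetter n) := by
  rintro z ⟨y, ⟨x, hx, p, hp⟩, q, -, hq, hz, hd⟩
  have hxn : ∀ k, x k < n := hX.2.2.2 x hx
  have ha : ∀ k, ∀ i ≤ ℓ (x k), (y (p k + i) = pairLetter n j (ℓ j) ↔ x k = j ∧ i = ℓ j) :=
    fun k i hi => by rw [hp.2 k i hi, pairLetter_inj (hxn k) hj]
  have hqi : ∀ k, ∀ i ≤ ℓ (x k), q (p k + (i : ℕ)) = q (p k) + i := by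
    intro k i hi
    induction i with
    | zero => simp
    | succ i ih =>
      have hne : ¬ y (p k + i) = pairLetter n j (ℓ j) := by
        rw [ha k i (by omega)]
        rintro ⟨rfl, rfl⟩
        omega
      have := hq (p k + i)
      rw [if_neg hne, ih (by omega)] at this
      push_cast
      rw [← add_assoc, this, add_assoc]
  refine ⟨x, hx, fun k => q (p k), fun k => ?_, fun k i hi => ?_⟩
  · have h1 := hq (p k + ℓ (x k))
    rw [hqi k _ le_rfl] at h1
    simp only [ha k _ le_rfl] at h1
    simp only
    rw [hp.1, h1]
    by_cases hk : x k = j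
    · rw [if_pos ⟨hk, by rw [hk]⟩, hk, Function.update_self]
      push_cast
      ring
    · rw [if_neg (fun h => hk h.1), Function.update_of_ne hk]
  · simp only
    by_cases hi' : i ≤ ℓ (x k)
    · rw [← hqi k i hi', hz, hp.2 k i hi']
    · have hk : x k = j := by
        by_contra hk
        rw [Function.update_of_ne hk] at hi
        exact hi' hi
      rw [hk, Function.update_self] at hi
      have hieq : i = ℓ (x k) + 1 := by rw [hk] at hi' ⊢; omega
      have h1 := hd (p k + ℓ (x k)) ((ha k _ le_rfl).2 ⟨hk, by rw [hk]⟩)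
      rw [hqi k _ le_rfl] at h1
      rw [hieq, hk, ← h1, hk]
      push_cast
      rw [add_assoc]

lemma substShift_subset_symbolExpansion (hX : IsSubshift (Set.Iio n) X) (hj : j < n) :
    substShift X (Function.update ℓ j (ℓ j + 1)) (pairLetter n) ⊆
      symbolExpansion (substShift X ℓ (pairLetter n)) (pairLetter n j (ℓ j))
        (pairLetter n j (ℓ j + 1)) := by
  rintro z ⟨x, hx, p', hp'⟩
  have hxn : ∀ k, x k < n := hX.2.2.2 x hx
  obtain ⟨p, -, hp⟩ := exists_of_increments (fun k => (ℓ (x k) : ℤ) + 1) 0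
  have hlt : ∀ k, p k < p (k + 1) := fun k => by rw [hp]; omega
  obtain ⟨y, hy⟩ := exists_blockwise hlt fun k i => pairLetter n (x k) i
  obtain ⟨q, hq⟩ := exists_blockwise hlt fun k i => p' k + (i : ℤ)
  have hy' : ∀ k, ∀ i ≤ ℓ (x k), y (p k + (i : ℕ)) = pairLetter n (x k) i :=
    fun k i hi => hy k i (by rw [hp]; omega)
  have hq' : ∀ k, ∀ i ≤ ℓ (x k), q (p k + (i : ℕ)) = p' k + i :=
    fun k i hi => hq k i (by rw [hp]; omega)
  have hsub : IsSubstitution ℓ (pairLetter n) x y p :=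
    ⟨fun k => by rw [hp, add_assoc], hy'⟩
  have hle : ∀ k, ℓ (x k) ≤ Function.update ℓ j (ℓ j + 1) (x k) := by
    intro k
    by_cases hk : x k = j
    · rw [hk, Function.update_self]; omega
    · rw [Function.update_of_ne hk]
  refine mem_symbolExpansion_of_reindex (mem_substShift_iff_shift _ _ _)
    ⟨x, hx, p, hsub⟩ (q := q) (fun m => ?_) (fun m => ?_) (fun m hm => ?_)
  · obtain ⟨k, i, hi, rfl⟩ := hsub.exists_eq_add m
    rw [hq' k i hi, hy' k i hi]
    simp only [pairLetter_inj (hxn k) hj]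
    rcases hi.lt_or_eq with hlt' | rfl
    · have hne : ¬ (x k = j ∧ i = ℓ j) := by
        rintro ⟨rfl, rfl⟩
        omega
      have := hq' k (i + 1) hlt'
      push_cast at this
      rw [if_neg hne, add_assoc, this]
      ring
    · have h1 : q (p (k + 1)) = p' (k + 1) := by simpa using hq' (k + 1) 0 (Nat.zero_le _)
      rw [add_assoc, ← hp, h1, hp'.1]
      by_cases hk : x k = j
      · rw [if_pos ⟨hk, by rw [hk]⟩, hk, Function.update_self]
        push_cast
        ring
      · rw [if_neg (fun h => hk h.1), Function.update_of_ne hk]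
  · obtain ⟨k, i, hi, rfl⟩ := hsub.exists_eq_add m
    rw [hq' k i hi, hy' k i hi, hp'.2 k i (hi.trans (hle k))]
  · obtain ⟨k, i, hi, rfl⟩ := hsub.exists_eq_add m
    rw [hy' k i hi, pairLetter_inj (hxn k) hj] at hm
    obtain ⟨hk, rfl⟩ := hm
    have := hp'.2 k (ℓ j + 1) (by rw [hk, Function.update_self])
    rw [hq' k _ hi, ← hk] at *
    rw [← this]
    push_cast
    rw [add_assoc]

lemma symbolExpansion_substShift (hX : IsSubshift (Set.Iio n) X) (hj : j < n) :
    symbolExpansion (substShift X ℓ (pairLetter n)) (pairLetter n j (ℓ j))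
        (pairLetter n j (ℓ j + 1)) =
      substShift X (Function.update ℓ j (ℓ j + 1)) (pairLetter n) :=
  (symbolExpansion_subset_substShift hX hj).antisymm (substShift_subset_symbolExpansion hX hj)

lemma flowEquiv_substShift_update (hX : IsSubshift (Set.Iio n) X) (hj : j < n) :
    FlowEquiv (substShift X ℓ (pairLetter n))
      (substShift X (Function.update ℓ j (ℓ j + 1)) (pairLetter n)) := by
  rw [← symbolExpansion_substShift hX hj]
  refine FlowEquiv.expand _ _ (isSubshift_substShift hX ℓ (pairLetter n))
    ⟨j, hj, ℓ j, le_rfl, rfl⟩ ?_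
  rintro ⟨j', hj', i, hi, h⟩
  obtain ⟨rfl, rfl⟩ := (pairLetter_inj hj hj').1 h
  omega

lemma substShift_of_length_zero (hX : IsSubshift (Set.Iio n) X) (hℓ : ∀ j < n, ℓ j = 0) :
    substShift X ℓ (pairLetter n) = X := by
  ext y
  constructor
  · rintro ⟨x, hx, p, hp⟩
    have hx0 : ∀ k, ℓ (x k) = 0 := fun k => hℓ _ (hX.2.2.2 x hx k)
    have hpk : ∀ k, p k = k + p 0 := by
      intro k
      induction k with
      | zero => simp
      | succ k ih => rw [hp.1, hx0, ih]; push_cast; ring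
      | pred k ih =>
        have := hp.1 (-(k : ℤ) - 1)
        rw [sub_add_cancel, hx0, ih] at this
        push_cast at this
        linarith
    have : (fun i => y (i + p 0)) = x := by
      funext k
      have := hp.2 k 0 (Nat.zero_le _)
      simpa [pairLetter, hpk k] using this
    rw [← mem_translate_iff hX.2.2.1 y (p 0), this]
    exact hx
  · intro hy
    have hy0 : ∀ k, ℓ (y k) = 0 := fun k => hℓ _ (hX.2.2.2 y hy k)
    refine ⟨y, hy, id, fun k => by simp [hy0], fun k i hi => ?_⟩
    obtain rfl : i = 0 := by rw [hy0] at hi; omega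
    simp [pairLetter]

lemma IsSubshift.flowEquiv_refl {A : Set ℕ} {Y : Set Seq} (hY : IsSubshift A Y) :
    FlowEquiv Y Y :=
  FlowEquiv.of_conjugate ⟨A, hY⟩ ⟨A, hY⟩ ⟨Homeomorph.refl _, fun _ _ h => h⟩

lemma flowEquiv_substShift_pairLetter (hX : IsSubshift (Set.Iio n) X) (ℓ : ℕ → ℕ) :
    FlowEquiv X (substShift X ℓ (pairLetter n)) := by
  induction hs : ∑ j ∈ Finset.range n, ℓ j generalizing ℓ with
  | zero =>
    have hℓ : ∀ j < n, ℓ j = 0 := fun j hj =>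
      Finset.sum_eq_zero_iff.1 hs j (Finset.mem_range.2 hj)
    rw [substShift_of_length_zero hX hℓ]
    exact hX.flowEquiv_refl
  | succ s ih =>
    obtain ⟨j, hj, hne⟩ := Finset.exists_ne_zero_of_sum_ne_zero (by omega :
      ∑ j ∈ Finset.range n, ℓ j ≠ 0)
    have hupd : Function.update (Function.update ℓ j (ℓ j - 1)) j
        (Function.update ℓ j (ℓ j - 1) j + 1) = ℓ := by
      rw [Function.update_self, Function.update_idem, Nat.sub_add_cancel (by omega),
        Function.update_eq_self]
    have hsum : ∑ i ∈ Finset.range n, Function.update ℓ j (ℓ j - 1) i = s := by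
      rw [Finset.sum_update_of_mem hj]
      have := Finset.sum_eq_add_sum_sdiff_singleton_of_mem hj ℓ
      omega
    have := flowEquiv_substShift_update (ℓ := Function.update ℓ j (ℓ j - 1)) hX
      (Finset.mem_range.1 hj)
    rw [hupd] at this
    exact (ih _ hsum).trans this

end Expansion

/-! ### The substitution `j ↦ 1^j 0` on biinfinite sequences -/

/-- The `i`-th letter of the word `1^j 0`. -/
def unaryLetter (j i : ℕ) : ℕ := if i < j then 1 else 0

section Recognizability

variable {x x' y : Seq} {p p' : ℤ → ℤ}

lemma IsSubstitution.apply_sub_one (h : IsSubstitution id unaryLetter x y p) (k : ℤ) :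
    y (p k - 1) = 0 := by
  have h1 := h.1 (k - 1)
  have h2 := h.2 (k - 1) (x (k - 1)) le_rfl
  rw [sub_add_cancel] at h1
  rw [h1, id_eq, add_sub_cancel_right, h2]
  simp [unaryLetter]

lemma IsSubstitution.apply_eq_one (h : IsSubstitution id unaryLetter x y p) {k m : ℤ}
    (hm : p k ≤ m) (hm' : m < p (k + 1) - 1) : y m = 1 := by
  rw [h.1, id_eq] at hm'
  have h2 := h.2 k (m - p k).toNat (by simp only [id_eq]; omega)
  rw [show p k + ((m - p k).toNat : ℤ) = m by omega] at h2
  rw [h2, unaryLetter, if_pos (by omega)]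

lemma IsSubstitution.position_succ_le (h : IsSubstitution id unaryLetter x y p)
    (h' : IsSubstitution id unaryLetter x' y p') {k : ℤ} (hk : p k = p' k) :
    p (k + 1) ≤ p' (k + 1) := by
  by_contra! hlt
  have h0 := h'.apply_sub_one (k + 1)
  have := h'.lt_succ k
  rw [h.apply_eq_one (k := k) (by omega) (by omega)] at h0
  exact one_ne_zero h0

lemma IsSubstitution.position_le_of_succ (h : IsSubstitution id unaryLetter x y p)
    (h' : IsSubstitution id unaryLetter x' y p') {k : ℤ} (hk : p (k + 1) = p' (k + 1)) :
    p k ≤ p' k := by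
  by_contra! hlt
  have h0 := h.apply_sub_one k
  have := h.lt_succ k
  rw [h'.apply_eq_one (k := k) (by omega) (by omega)] at h0
  exact one_ne_zero h0

lemma IsSubstitution.position_zero_le (h : IsSubstitution id unaryLetter x y p)
    (h' : IsSubstitution id unaryLetter x' y p') (hp : p 0 ≤ 0) (hp' : 0 < p' 1) :
    p 0 ≤ p' 0 := by
  by_contra! hlt
  have h0 := h.apply_sub_one 0
  rw [h'.apply_eq_one (k := 0) (by omega) (by rw [zero_add]; omega)] at h0
  exact one_ne_zero h0

lemma IsSubstitution.unique (h : IsSubstitution id unaryLetter x y p)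
    (h' : IsSubstitution id unaryLetter x' y p') (hp : p 0 ≤ 0 ∧ 0 < p 1)
    (hp' : p' 0 ≤ 0 ∧ 0 < p' 1) : p = p' ∧ x = x' := by
  have hpp : p = p' := by
    funext k
    induction k with
    | zero =>
      exact (h.position_zero_le h' hp.1 hp'.2).antisymm
        (h'.position_zero_le h hp'.1 hp.2)
    | succ k ih => exact (h.position_succ_le h' ih).antisymm (h'.position_succ_le h ih.symm)
    | pred k ih =>
      rw [← sub_add_cancel (-(k : ℤ)) 1] at ih
      exact (h.position_le_of_succ h' ih).antisymm (h'.position_le_of_succ h ih.symm)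
  refine ⟨hpp, ?_⟩
  funext k
  have h1 := h.1 k
  have h2 := h'.1 k
  rw [hpp] at h1
  simp only [id_eq] at h1 h2
  omega

end Recognizability

lemma IsSubshift.isCompact {A : Set ℕ} {X : Set Seq} (hX : IsSubshift A X) : IsCompact X :=
  (isCompact_univ_pi fun _ : ℤ => hX.1.isCompact).of_isClosed_subset hX.2.1
    fun x hx i _ => hX.2.2.2 x hx i

lemma flowEquiv_substShift_unaryLetter {n : ℕ} {X : Set Seq}
    (hX : IsSubshift (Set.Iio n) X) : FlowEquiv X (substShift X id unaryLetter) := by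
  refine (flowEquiv_substShift_pairLetter hX id).trans ?_
  have hsub := isSubshift_substShift hX id (pairLetter n)
  have hsub' := isSubshift_substShift hX id unaryLetter
  let f : ℕ → ℕ := fun m => unaryLetter (m % n) (m / n)
  have hf : ∀ {x y : Seq} {p : ℤ → ℤ}, x ∈ X → IsSubstitution id (pairLetter n) x y p →
      IsSubstitution id unaryLetter x (fun i => f (y i)) p := by
    intro x y p hx h
    have hxn := hX.2.2.2 x hx
    refine ⟨h.1, fun k i hi => ?_⟩
    simp only [h.2 k i hi, f, pairLetter_mod (hxn k), pairLetter_div (hxn k)]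
  let φ : substShift X id (pairLetter n) → substShift X id unaryLetter := fun y =>
    ⟨fun i => f (y.1 i), by
      obtain ⟨x, hx, p, hp⟩ := y.2
      exact ⟨x, hx, p, hf hx hp⟩⟩
  have hφ : Continuous φ := by
    refine Continuous.subtype_mk (continuous_pi fun i => ?_) _
    exact (continuous_of_discreteTopology (f := f)).comp
      ((continuous_apply (A := fun _ : ℤ => ℕ) i).comp continuous_subtype_val)
  have hbij : Function.Bijective φ := by
    constructor
    · rintro ⟨y, hy⟩ ⟨y', hy'⟩ h
      obtain ⟨x, hx, p, h0, hp⟩ := exists_normalized_of_mem_substShift hX.2.2.1 hy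
      obtain ⟨x', hx', p', h0', hp'⟩ := exists_normalized_of_mem_substShift hX.2.2.1 hy'
      have heq : (fun i => f (y i)) = fun i => f (y' i) := congrArg Subtype.val h
      obtain ⟨rfl, rfl⟩ := (hf hx hp).unique (heq ▸ hf hx' hp') h0 h0'
      refine Subtype.ext (funext fun m => ?_)
      obtain ⟨k, i, hi, rfl⟩ := hp.exists_eq_add m
      exact (hp.2 k i hi).trans (hp'.2 k i hi).symm
    · rintro ⟨z, x, hx, p, hp⟩
      obtain ⟨y, hy⟩ := exists_blockwise hp.lt_succ fun k i => pairLetter n (x k) i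
      have hy' : IsSubstitution id (pairLetter n) x y p :=
        ⟨hp.1, fun k i hi => hy k i (by rw [hp.1]; omega)⟩
      refine ⟨⟨y, x, hx, p, hy'⟩, Subtype.ext (funext fun m => ?_)⟩
      obtain ⟨k, i, hi, rfl⟩ := hp.exists_eq_add m
      exact ((hf hx hy').2 k i hi).trans (hp.2 k i hi).symm
  have : CompactSpace (substShift X id (pairLetter n)) :=
    isCompact_iff_compactSpace.1 hsub.isCompact
  refine FlowEquiv.of_conjugate ⟨_, hsub⟩ ⟨_, hsub'⟩
    ⟨Continuous.homeoOfEquivCompactToT2 (f := Equiv.ofBijective φ hbij) hφ, ?_⟩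
  intro y y' h
  change shift (fun i => f (y.1 i)) = fun i => f (y'.1 i)
  rw [← h]
  rfl

lemma IsSubstitution.apply_eq_unary {x y : Seq} {p : ℤ → ℤ}
    (h : IsSubstitution id unaryLetter x y p) (s : ℕ) :
    ∀ k (i : ℕ), i ≤ x k →
      y (p k + i + s) = unary (Function.update (rightTail x k) 0 (x k - i)) s := by
  induction s with
  | zero =>
    intro k i hi
    have := h.2 k i hi
    rw [unary_zero, Function.update_self]
    simp only [Nat.cast_zero, add_zero, this, unaryLetter]
    split_ifs <;> omega
  | succ s ih =>
    intro k i hi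
    rw [unary_succ]
    rcases hi.lt_or_eq with hlt | rfl
    · have hstep : unaryStep (Function.update (rightTail x k) 0 (x k - i)) =
          Function.update (rightTail x k) 0 (x k - (i + 1)) := by
        rw [unaryStep, Function.update_self, if_neg (by omega), Function.update_idem,
          Nat.sub_sub]
      rw [hstep, ← ih k (i + 1) hlt]
      congr 1
      push_cast
      ring
    · have hstep : unaryStep (Function.update (rightTail x k) 0 (x k - x k)) =
          Function.update (rightTail x (k + 1)) 0 (x (k + 1) - 0) := by
        rw [unaryStep, Function.update_self, if_pos (Nat.sub_self _)]
        funext r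
        have hr : 1 + r ≠ 0 := by omega
        rw [dropSeq, Function.update_of_ne hr]
        rcases Nat.eq_zero_or_pos r with rfl | hr0
        · simp [rightTail]
        · rw [Function.update_of_ne hr0.ne', rightTail, rightTail]
          congr 1
          push_cast
          ring
      rw [hstep, ← ih (k + 1) 0 (Nat.zero_le _), h.1]
      congr 1
      push_cast [id_eq]
      ring

lemma IsSubstitution.rightTail_eq_unary {x y : Seq} {p : ℤ → ℤ}
    (h : IsSubstitution id unaryLetter x y p) {k : ℤ} {i : ℕ} (hi : i ≤ x k) :
    rightTail y (p k + i) = unary (Function.update (rightTail x k) 0 (x k - i)) :=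
  funext fun s => h.apply_eq_unary s k i hi

lemma IsSubstitution.rightTail_position {x y : Seq} {p : ℤ → ℤ}
    (h : IsSubstitution id unaryLetter x y p) (k : ℤ) :
    rightTail y (p k) = unary (rightTail x k) := by
  have := h.rightTail_eq_unary (k := k) (Nat.zero_le _)
  have h0 : x k - 0 = rightTail x k 0 := by simp [rightTail]
  rwa [h0, Function.update_eq_self, Nat.cast_zero, add_zero] at this

/-- A biinfinite binary sequence in which zeros occur with bounded gaps is the
concatenation of words of the form `1^j 0`. -/
lemma exists_isSubstitution_unaryLetter {y : Seq} (hy : ∀ m, y m ≤ 1) {N : ℕ}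
    (hN : ∀ m, ∃ i ≤ N, y (m + (i : ℕ)) = 0) :
    ∃ x p, IsSubstitution id unaryLetter x y p := by
  classical
  let Z := {m : ℤ // y m = 0}
  have : Nonempty Z := let ⟨i, _, hi⟩ := hN 0; ⟨⟨_, hi⟩⟩
  have : NoMaxOrder Z := ⟨fun z => by
    obtain ⟨i, -, hi⟩ := hN (z.1 + 1)
    exact ⟨⟨_, hi⟩, Subtype.mk_lt_mk.2 (by omega)⟩⟩
  have : NoMinOrder Z := ⟨fun z => by
    obtain ⟨i, hle, hi⟩ := hN (z.1 - 1 - N)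
    exact ⟨⟨_, hi⟩, Subtype.mk_lt_mk.2 (by omega)⟩⟩
  let _ : SuccOrder Z := LinearLocallyFiniteOrder.succOrder Z
  let _ : PredOrder Z := LinearLocallyFiniteOrder.predOrder Z
  let e : ℤ ≃o Z := (orderIsoIntOfLinearSuccPredArch (ι := Z)).symm
  have hlt : ∀ k, (e k).1 < (e (k + 1)).1 := fun k => e.lt_iff_lt.2 (by omega)
  refine ⟨fun k => ((e (k + 1)).1 - (e k).1 - 1).toNat, fun k => (e k).1 + 1,
    fun k => ?_, fun k i hi => ?_⟩
  · have := hlt k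
    simp only [id_eq]
    omega
  · have := hlt k
    simp only [id_eq] at hi ⊢
    unfold unaryLetter
    split_ifs with hi'
    · have hne : y ((e k).1 + 1 + i) ≠ 0 := by
        intro h0
        obtain ⟨l, hl⟩ := e.surjective ⟨_, h0⟩
        have hl' := congrArg Subtype.val hl
        simp only at hl'
        have h1 : e k < e l := Subtype.coe_lt_coe.1 (by omega)
        have h2 : e l < e (k + 1) := Subtype.coe_lt_coe.1 (by omega)
        rw [e.lt_iff_lt] at h1 h2
        omega
      have := hy ((e k).1 + 1 + i)
      omega
    · rw [show (e k).1 + 1 + (i : ℤ) = (e (k + 1)).1 by omega]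
      exact (e (k + 1)).2

/-! ### Beta-shifts and the substitution `j ↦ 1^j 0` -/

lemma IsExpansionOfOne.isSubshift_betaShift {β : ℝ} (hβ : 1 < β) {g : ℕ → ℕ}
    (hg : IsExpansionOfOne β g) : IsSubshift (Set.Iio (g 0 + 1)) (betaShift β) := by
  have hset : betaShift β = {x | ∀ i, LexLE (rightTail x i) g} :=
    Set.ext fun x => hg.mem_betaShift_iff hβ
  rw [hset]
  refine ⟨Set.finite_Iio _, ?_, fun x => ?_, fun x hx i => ?_⟩
  · have hcont : ∀ (i : ℤ) (k : ℕ), Continuous fun x : Seq => rightTail x i k :=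
      fun i k => continuous_apply _
    simp only [LexLE, Set.ofPred_forall]
    refine isClosed_iInter fun i => isClosed_iInter fun q => isClosed_imp ?_ ?_
    · have : {x : Seq | ∀ k < q, rightTail x i k = g k} =
          ⋂ k ∈ Set.Iio q, {x : Seq | rightTail x i k = g k} := by
        ext x
        simp
      rw [this]
      exact (Set.finite_Iio q).isOpen_biInter fun k _ =>
        (isOpen_discrete {g k}).preimage (hcont i k)
    · exact (isClosed_discrete (Set.Iic (g q))).preimage (hcont i q)
  · have htail : ∀ i, rightTail (shift x) i = rightTail x (i + 1) := by
      intro i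
      funext k
      simp only [rightTail, shift]
      congr 1
      ring
    constructor
    · intro h i
      rw [htail]
      exact h _
    · intro h i
      have := h (i - 1)
      rwa [htail, sub_add_cancel] at this
  · have := hx i 0 (by simp)
    simp only [rightTail, Nat.cast_zero, add_zero] at this
    exact Nat.lt_succ_of_le this

lemma substShift_betaShift {β β' : ℝ} (hβ : 1 < β) (hβ' : 1 < β') {g : ℕ → ℕ}
    (hg : IsExpansionOfOne β g) (hg' : IsExpansionOfOne β' (unary g)) :
    substShift (betaShift β) id unaryLetter = betaShift β' := by
  ext y
  rw [hg'.mem_betaShift_iff hβ']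
  constructor
  · rintro ⟨x, hx, p, hp⟩ m
    rw [hg.mem_betaShift_iff hβ] at hx
    obtain ⟨k, i, hi, rfl⟩ := hp.exists_eq_add m
    rcases Nat.eq_zero_or_pos i with rfl | hi0
    · rw [Nat.cast_zero, add_zero, hp.rightTail_position, lexLE_unary_iff]
      exact hx k
    · rw [hp.rightTail_eq_unary hi, lexLE_unary_iff]
      have h0 := hx k 0 (by simp)
      simp only [rightTail, Nat.cast_zero, add_zero, id_eq] at h0 hi
      refine LexLT.lexLE ⟨0, by simp, ?_⟩
      rw [Function.update_self]
      omega
  · intro hy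
    have hle : ∀ m, y m ≤ 1 := by
      intro m
      have := hy m 0 (by simp)
      simp only [rightTail, Nat.cast_zero, add_zero] at this
      exact this.trans (unary_le_one g 0)
    have hgap : ∀ m, ∃ i ≤ g 0, y (m + (i : ℕ)) = 0 := by
      intro m
      by_contra! hne
      have h1 : ∀ i < g 0, rightTail y m i = unary g i := by
        intro i hi
        rw [unary_apply_of_lt hi]
        have := hne i hi.le
        have := hle (m + i)
        simp only [rightTail]
        omega
      have h2 := hy m (g 0) h1
      rw [unary_apply_head] at h2
      exact hne (g 0) le_rfl (Nat.le_zero.1 h2)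
    obtain ⟨x, p, hp⟩ := exists_isSubstitution_unaryLetter hle hgap
    refine ⟨x, (hg.mem_betaShift_iff hβ).2 fun k => ?_, p, hp⟩
    rw [← lexLE_unary_iff, ← hp.rightTail_position]
    exact hy _

/-- For every `β > 1` there exists `1 < β' < 2` such that the
beta-shifts `X_β` and `X_{β'}` are flow equivalent. -/
theorem statement13 (β : ℝ) (hβ : 1 < β) :
    ∃ β' : ℝ, 1 < β' ∧ β' < 2 ∧ FlowEquiv (betaShift β) (betaShift β') := by
  have hg := isExpansionOfOne_quasiDigit hβ
  obtain ⟨β', h1, h2, hg'⟩ := exists_isExpansionOfOne hg.tailMax.unary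
    (exists_unary_ne_zero hg.frequently_ne_zero) (unary_le_one _) (unary_apply_head _)
  refine ⟨β', h1, h2, ?_⟩
  rw [← substShift_betaShift hβ h1 hg hg']
  exact flowEquiv_substShift_unaryLetter (hg.isSubshift_betaShift hβ)

end SymbolicDynamics
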